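/- Let D be a digraph with m arcs and minimum outdegree at least 4, let X, Y be a partition of V(D) with e(X) = 0, set θ := min{|θ(X₁,X₂)| : X₁,X₂ a partition of X}, X' := {x ∈ X : s(x) ≥ θ}, g := Σ_{x∈X∖X'} s(x), and b := (1/2)·Σ_{x∈X}(d(x) − s(x)). Let ε > 0 and suppose every y ∈ Y satisfies d(y) ≤ ε²m/4, and suppose |X'| = 3, written X' = {v₁,v₂,v₃} with Δⱼ := s(vⱼ) and Δ₁ ≥ Δ₂ ≥ Δ₃. Then either there exists a bipartition V(D) = V₁ ∪ V₂ with min{e(V₁,V₂), e(V₂,V₁)} ≥ (3/14 − ε)·m, or 2Δ₂ + 2Δ₃ − 3Δ₁ − 3g − b + 3·e(Y)/14 < 0, or both 6Δ₁ − 3Δ₂ − 3Δ₃ + 2g − b + 3·e(Y)/14 < 0 and 6Δ₃ − 3Δ₁ − 3Δ₂ − 3g + b/3 + 3·e(Y)/14 < 0. -/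

import Mathlib

open Finset

/-- Number of arcs of the digraph `A` directed from a vertex of `S` to a vertex of `T`. -/
def dArcs {V : Type} [Fintype V] [DecidableEq V] (A : V → V → Prop) [DecidableRel A]
    (S T : Finset V) : ℕ :=
  ((S ×ˢ T).filter fun p => A p.1 p.2).card

/-- Outdegree of `x`. -/
def outDeg {V : Type} [Fintype V] (A : V → V → Prop) [DecidableRel A] (x : V) : ℕ :=
  (Finset.univ.filter fun y => A x y).card

/-- Indegree of `x`. -/
def inDeg {V : Type} [Fintype V] (A : V → V → Prop) [DecidableRel A] (x : V) : ℕ :=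
  (Finset.univ.filter fun y => A y x).card

/-- Degree of `x`: outdegree plus indegree. -/
def deg {V : Type} [Fintype V] (A : V → V → Prop) [DecidableRel A] (x : V) : ℕ :=
  outDeg A x + inDeg A x

/-- `s(x) = max{d⁺(x) − d⁻(x), d⁻(x) − d⁺(x)}`. -/
def sVal {V : Type} [Fintype V] (A : V → V → Prop) [DecidableRel A] (x : V) : ℤ :=
  max ((outDeg A x : ℤ) - (inDeg A x : ℤ)) ((inDeg A x : ℤ) - (outDeg A x : ℤ))

/-- The gap `θ(X₁,X₂) = (e(X₁,Y)+e(Y,X₂)) − (e(X₂,Y)+e(Y,X₁))`. -/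
def gap {V : Type} [Fintype V] [DecidableEq V] (A : V → V → Prop) [DecidableRel A]
    (X₁ X₂ Y : Finset V) : ℤ :=
  ((dArcs A X₁ Y : ℤ) + (dArcs A Y X₂ : ℤ)) - ((dArcs A X₂ Y : ℤ) + (dArcs A Y X₁ : ℤ))

/-! Put part of `X` on each side of the cut and let every vertex of `Y` join the first side
independently with probability `5 / 14`. The expected number of arcs cut in a given direction is
`3 m / 14 + (c + 3 e(Y) / 14) / 14`, where `c` is a sum of integer contributions of the vertices of
`X`. If the inequalities of the theorem fail, one of two placements of `X` makes both expectations
at least `3 m / 14`: a vertex `v_j` is opposed to the other two vertices of `X'`, and the remaining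
vertices of `X` either side with `v_j = v₁`, or all go to the first side, in which case `v_j` has
the largest `min(d⁺, d⁻)` in `X'`. The degrees in `Y` are small, so rounding the vertices of `Y` one
at a time, keeping the sum of the two squared deviations small, gives a cut within `ε m / 2` of
both expectations. -/

section Rounding

variable {V : Type*} [DecidableEq V]

lemma exists_le_of_average_le {p a₀ a₁ M : ℝ} (hp : p ∈ Set.Icc 0 1)
    (h : p * a₁ + (1 - p) * a₀ ≤ M) : a₀ ≤ M ∨ a₁ ≤ M := by
  by_contra! hlt
  obtain ⟨hp₀, hp₁⟩ := hp
  nlinarith [mul_nonneg hp₀ (sub_nonneg.2 hlt.2.le),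
    mul_nonneg (sub_nonneg.2 hp₁) (sub_nonneg.2 hlt.1.le)]

lemma update_mem_Icc {x : V → ℝ} (hx : x ∈ Set.Icc 0 1) (y : V) {t : ℝ} (ht : t ∈ Set.Icc 0 1) :
    Function.update x y t ∈ Set.Icc 0 1 :=
  ⟨le_update_iff.2 ⟨ht.1, fun u _ => hx.1 u⟩, update_le_iff.2 ⟨ht.2, fun u _ => hx.2 u⟩⟩

/-- The method of conditional expectations: `x y` is the probability of rounding `x` up at `y`. -/
theorem exists_rounding_le {Φ : (V → ℝ) → ℝ} {κ : V → ℝ} {S : Finset V}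
    (hΦ : ∀ x ∈ Set.Icc 0 1, ∀ y ∈ S, x y * Φ (Function.update x y 1) +
      (1 - x y) * Φ (Function.update x y 0) ≤ Φ x + κ y)
    {x : V → ℝ} (hx : x ∈ Set.Icc 0 1) :
    ∃ z : V → ℝ, (∀ u ∉ S, z u = x u) ∧ (∀ u ∈ S, z u = 0 ∨ z u = 1) ∧
      Φ z ≤ Φ x + ∑ y ∈ S, κ y := by
  induction S using Finset.induction_on generalizing x with
  | empty => exact ⟨x, by simp⟩
  | insert y S hy ih =>
    obtain ⟨r, hr, hle⟩ : ∃ r : ℝ, (r = 0 ∨ r = 1) ∧ Φ (Function.update x y r) ≤ Φ x + κ y := by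
      rcases exists_le_of_average_le ⟨hx.1 y, hx.2 y⟩ (hΦ x hx y (mem_insert_self y S))
        with h | h
      exacts [⟨0, .inl rfl, h⟩, ⟨1, .inr rfl, h⟩]
    have hr01 : r ∈ Set.Icc (0 : ℝ) 1 := by rcases hr with rfl | rfl <;> simp
    obtain ⟨z, hz, hz01, hzle⟩ := ih (fun x hx u hu => hΦ x hx u (mem_insert_of_mem hu))
      (update_mem_Icc hx y hr01)
    refine ⟨z, fun u hu => ?_, fun u hu => ?_, ?_⟩
    · rw [mem_insert, not_or] at hu
      rw [hz u hu.2, Function.update_of_ne hu.1]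
    · rcases mem_insert.1 hu with rfl | hu
      · rwa [hz u hy, Function.update_self]
      · exact hz01 u hu
    · rw [sum_insert hy]
      linarith

end Rounding

section FracCut

open Matrix

variable {V R : Type*} [Fintype V] [CommRing R]

/-- The multilinear extension of the weight of a cut: the expected weight of the arcs leaving a
random set that contains each vertex `u` independently with probability `x u`, when the arc from
`u` to `v` has weight `w u v` and there are no loops. -/
def fracCut (w : Matrix V V R) (x : V → R) : R :=
  x ⬝ᵥ w *ᵥ (1 - x)

/-- The partial derivative of `fracCut w` at `x` in the direction `y`, for `w` without loops. -/
def fracCutDeriv (w : Matrix V V R) (x : V → R) (y : V) : R :=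
  (w *ᵥ (1 - x)) y - (x ᵥ* w) y

lemma fracCut_update [DecidableEq V] {w : Matrix V V R} {y : V} (hw : w y y = 0) (x : V → R)
    (t : R) :
    fracCut w (Function.update x y t) = fracCut w x + (t - x y) * fracCutDeriv w x y := by
  have hupdate : Function.update x y t = x + Pi.single y (t - x y) := by
    rw [Pi.update_eq_sub_add_single, Pi.single_sub]
    abel
  have hone_sub : 1 - (x + Pi.single y (t - x y)) = 1 - x - Pi.single y (t - x y) := by abel
  rw [hupdate, fracCut, hone_sub, mulVec_sub, add_dotProduct, dotProduct_sub, dotProduct_sub,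
    single_dotProduct, single_dotProduct, dotProduct_mulVec x w (Pi.single _ _),
    dotProduct_single, mulVec_single, fracCut, fracCutDeriv]
  simp only [MulOpposite.op_sub, Pi.smul_apply, col_apply, hw, smul_zero, mul_zero, sub_zero]
  ring

lemma abs_fracCutDeriv_le {w : Matrix V V ℝ} (hw : ∀ u v, 0 ≤ w u v) {x : V → ℝ}
    (hx : x ∈ Set.Icc 0 1) (y : V) :
    |fracCutDeriv w x y| ≤ ∑ v, w y v + ∑ u, w u y := by
  have hrow₀ : 0 ≤ (w *ᵥ (1 - x)) y :=
    dotProduct_nonneg_of_nonneg (hw y) (sub_nonneg.2 hx.2)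
  have hcol₀ : 0 ≤ (x ᵥ* w) y := dotProduct_nonneg_of_nonneg hx.1 fun u => hw u y
  have hrow₁ : (w *ᵥ (1 - x)) y ≤ ∑ v, w y v :=
    (dotProduct_le_dotProduct_of_nonneg_left (sub_le_self 1 hx.1) (hw y)).trans_eq
      (dotProduct_one _)
  have hcol₁ : (x ᵥ* w) y ≤ ∑ u, w u y :=
    (dotProduct_le_dotProduct_of_nonneg_right hx.2 fun u => hw u y).trans_eq (one_dotProduct _)
  rw [fracCutDeriv, abs_le]
  constructor <;> linarith

end FracCut

lemma average_sq_add_sq_le {p a c a' c' D : ℝ} (hc : |c| ≤ D) (hc' : |c'| ≤ D) :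
    p * ((a + (1 - p) * c) ^ 2 + (a' + (1 - p) * c') ^ 2) +
        (1 - p) * ((a + (0 - p) * c) ^ 2 + (a' + (0 - p) * c') ^ 2) ≤
      a ^ 2 + a' ^ 2 + D ^ 2 / 2 := by
  have hp : p * (1 - p) ≤ 1 / 4 := by nlinarith [sq_nonneg (p - 1 / 2)]
  have hcsq : c ^ 2 ≤ D ^ 2 := sq_le_sq' (abs_le.1 hc).1 (abs_le.1 hc).2
  have hcsq' : c' ^ 2 ≤ D ^ 2 := sq_le_sq' (abs_le.1 hc').1 (abs_le.1 hc').2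
  calc _ = a ^ 2 + a' ^ 2 + p * (1 - p) * (c ^ 2 + c' ^ 2) := by ring
    _ ≤ a ^ 2 + a' ^ 2 + 1 / 4 * (c ^ 2 + c' ^ 2) := by gcongr
    _ ≤ a ^ 2 + a' ^ 2 + D ^ 2 / 2 := by linarith

section Arcs

open Matrix

variable {V : Type} (A : V → V → Prop) [DecidableRel A]

/-- The adjacency matrix of the digraph `A`. -/
def arcMatrix : Matrix V V ℝ :=
  Matrix.of fun u v => if A u v then 1 else 0

variable {A} in
lemma arcMatrix_apply_eq_zero {u v : V} (h : ¬ A u v) : arcMatrix A u v = 0 :=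
  if_neg h

lemma arcMatrix_nonneg (u v : V) : 0 ≤ arcMatrix A u v := by
  rw [arcMatrix, of_apply]
  positivity

variable [Fintype V]

lemma cast_outDeg (u : V) : (outDeg A u : ℝ) = ∑ v, arcMatrix A u v := by
  simp [outDeg, arcMatrix]

lemma cast_inDeg (u : V) : (inDeg A u : ℝ) = ∑ v, arcMatrix A v u :=
  cast_outDeg (Function.swap A) u

lemma cast_deg (u : V) : (deg A u : ℝ) = outDeg A u + inDeg A u := by
  rw [deg, Nat.cast_add]

lemma abs_fracCutDeriv_arcMatrix_le {x : V → ℝ} (hx : x ∈ Set.Icc 0 1) (y : V) :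
    |fracCutDeriv (arcMatrix A) x y| ≤ deg A y := by
  rw [cast_deg, cast_outDeg, cast_inDeg]
  exact abs_fracCutDeriv_le (arcMatrix_nonneg A) hx y

lemma outDeg_swap (u : V) : outDeg (Function.swap A) u = inDeg A u :=
  rfl

lemma inDeg_swap (u : V) : inDeg (Function.swap A) u = outDeg A u :=
  rfl

lemma deg_swap (u : V) : deg (Function.swap A) u = deg A u :=
  Nat.add_comm _ _

variable [DecidableEq V]

lemma dArcs_swap (S T : Finset V) : dArcs (Function.swap A) S T = dArcs A T S :=
  card_bij' (fun p _ => p.swap) (fun p _ => p.swap)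
    (by simp +contextual [Function.swap]) (by simp +contextual [Function.swap]) (by simp) (by simp)

lemma cast_dArcs (S T : Finset V) : (dArcs A S T : ℝ) = ∑ u ∈ S, ∑ v ∈ T, arcMatrix A u v := by
  rw [dArcs, card_filter, sum_product]
  push_cast
  rfl

lemma indicator_dotProduct_arcMatrix_mulVec_indicator (S T : Finset V) :
    (S : Set V).indicator 1 ⬝ᵥ arcMatrix A *ᵥ (T : Set V).indicator 1 = dArcs A S T := by
  simp [cast_dArcs, dotProduct, mulVec, Set.indicator_apply]

lemma fracCut_indicator (S : Finset V) :
    fracCut (arcMatrix A) ((S : Set V).indicator 1) = dArcs A S Sᶜ := by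
  rw [fracCut, ← Set.indicator_compl, ← coe_compl,
    indicator_dotProduct_arcMatrix_mulVec_indicator]

lemma sum_deg : ∑ u, (deg A u : ℝ) = 2 * dArcs A univ univ := by
  simp_rw [cast_deg, cast_outDeg, cast_inDeg, sum_add_distrib, cast_dArcs]
  rw [sum_comm (f := fun u v => arcMatrix A v u), two_mul]

lemma sum_deg_sq_le {Y : Finset V} {Δ : ℝ} (hΔ : 0 ≤ Δ) (hY : ∀ y ∈ Y, (deg A y : ℝ) ≤ Δ) :
    ∑ y ∈ Y, (deg A y : ℝ) ^ 2 ≤ 2 * Δ * dArcs A univ univ :=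
  calc ∑ y ∈ Y, (deg A y : ℝ) ^ 2 ≤ ∑ y ∈ Y, Δ * deg A y :=
        sum_le_sum fun y hy => by
          rw [sq]
          exact mul_le_mul_of_nonneg_right (hY y hy) (Nat.cast_nonneg _)
    _ ≤ Δ * ∑ y, (deg A y : ℝ) := by
        rw [← mul_sum]
        gcongr
        exact subset_univ Y
    _ = 2 * Δ * dArcs A univ univ := by rw [sum_deg]; ring

variable {A}

theorem exists_cut_near_fracCut (hirr : ∀ v, ¬ A v v) {Y : Finset V} {Δ : ℝ} (hΔ : 0 ≤ Δ)
    (hY : ∀ y ∈ Y, (deg A y : ℝ) ≤ Δ) {x : V → ℝ} (hx : x ∈ Set.Icc 0 1)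
    (hxY : ∀ u ∉ Y, x u = 0 ∨ x u = 1) :
    ∃ T : Finset V, (dArcs A T Tᶜ - fracCut (arcMatrix A) x) ^ 2 +
      (dArcs A Tᶜ T - fracCut (arcMatrix (Function.swap A)) x) ^ 2 ≤ Δ * dArcs A univ univ := by
  obtain ⟨z, hz, hz01, hle⟩ := exists_rounding_le
    (Φ := fun z => (fracCut (arcMatrix A) z - fracCut (arcMatrix A) x) ^ 2 +
      (fracCut (arcMatrix (Function.swap A)) z - fracCut (arcMatrix (Function.swap A)) x) ^ 2)
    (κ := fun y => (deg A y : ℝ) ^ 2 / 2) (S := Y) (fun z hz y _ => by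
      simp only [fracCut_update (arcMatrix_apply_eq_zero (hirr y)),
        fracCut_update (w := arcMatrix (Function.swap A)) (arcMatrix_apply_eq_zero (hirr y)),
        add_sub_right_comm]
      refine average_sq_add_sq_le (abs_fracCutDeriv_arcMatrix_le A hz y) ?_
      exact deg_swap A y ▸ abs_fracCutDeriv_arcMatrix_le (Function.swap A) hz y) hx
  have hz01' : ∀ u, z u = 0 ∨ z u = 1 := fun u =>
    if hu : u ∈ Y then hz01 u hu else hz u hu ▸ hxY u hu
  obtain ⟨T, rfl⟩ : ∃ T : Finset V, z = (T : Set V).indicator 1 := by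
    refine ⟨univ.filter (z · = 1), funext fun u => ?_⟩
    rcases hz01' u with h | h <;> simp [h]
  refine ⟨T, ?_⟩
  rw [← fracCut_indicator, ← dArcs_swap, ← fracCut_indicator]
  rw [sub_self, sub_self, ← sum_div] at hle
  linarith [sum_deg_sq_le A hΔ hY]

end Arcs

section Surplus

open Matrix

variable {V : Type} [Fintype V] (A : V → V → Prop) [DecidableRel A]

/-- The surplus of the vertices of `S ∪ T` when those of `S` are put on the first side of a cut and
those of `T` on the second, all their neighbours being on the first side with probability `5 / 14`:
the expected number of their arcs going from the first side to the second, minus `3 / 14` of their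
degrees, all scaled by `14`. -/
def surplus (S T : Finset V) : ℝ :=
  ∑ u ∈ S, (6 * outDeg A u - 3 * inDeg A u : ℝ) + ∑ u ∈ T, (2 * inDeg A u - 3 * outDeg A u : ℝ)

variable [DecidableEq V]

lemma cast_dArcs_univ_right (S : Finset V) :
    (dArcs A S univ : ℝ) = ∑ u ∈ S, (outDeg A u : ℝ) := by
  simp_rw [cast_dArcs, cast_outDeg]

lemma cast_dArcs_add_compl_right (S T : Finset V) :
    (dArcs A S T : ℝ) + dArcs A S Tᶜ = dArcs A S univ := by
  simp_rw [cast_dArcs, ← sum_add_distrib, sum_add_sum_compl]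

lemma cast_dArcs_add_compl_left (S T : Finset V) :
    (dArcs A S T : ℝ) + dArcs A Sᶜ T = dArcs A univ T := by
  simp_rw [cast_dArcs, sum_add_sum_compl]

variable {A}

lemma dArcs_eq_zero_of_subset {X S T : Finset V} (hX : dArcs A X X = 0) (hS : S ⊆ X)
    (hT : T ⊆ X) : dArcs A S T = 0 :=
  Nat.eq_zero_of_le_zero <| hX ▸ card_le_card
    (filter_subset_filter _ (product_subset_product hS hT))

lemma cast_dArcs_compl_right {X S : Finset V} (hX : dArcs A X X = 0) (hS : S ⊆ X) :
    (dArcs A S Xᶜ : ℝ) = ∑ u ∈ S, (outDeg A u : ℝ) := by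
  rw [← cast_dArcs_univ_right, ← cast_dArcs_add_compl_right A S X,
    dArcs_eq_zero_of_subset hX hS Subset.rfl, Nat.cast_zero, zero_add]

lemma cast_dArcs_compl_left {X T : Finset V} (hX : dArcs A X X = 0) (hT : T ⊆ X) :
    (dArcs A Xᶜ T : ℝ) = ∑ u ∈ T, (inDeg A u : ℝ) := by
  rw [← dArcs_swap, cast_dArcs_compl_right ((dArcs_swap A X X).trans hX) hT]
  rfl

lemma cast_dArcs_univ_univ {X : Finset V} (hX : dArcs A X X = 0) :
    (dArcs A univ univ : ℝ) = ∑ u ∈ X, (outDeg A u : ℝ) + ∑ u ∈ X, (inDeg A u : ℝ) +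
      dArcs A Xᶜ Xᶜ := by
  rw [← cast_dArcs_add_compl_left A X, cast_dArcs_univ_right,
    ← cast_dArcs_add_compl_right A Xᶜ X, cast_dArcs_compl_left hX Subset.rfl, add_assoc]

lemma fracCut_indicator_add_smul {X S : Finset V} (hX : dArcs A X X = 0) (hS : S ⊆ X) (q : ℝ) :
    fracCut (arcMatrix A) ((S : Set V).indicator 1 + q • ((Xᶜ : Finset V) : Set V).indicator 1) =
      (1 - q) * ∑ u ∈ S, (outDeg A u : ℝ) + q * ∑ u ∈ X \ S, (inDeg A u : ℝ) +
        q * (1 - q) * dArcs A Xᶜ Xᶜ := by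
  have hone_sub : (1 : V → ℝ) -
      ((S : Set V).indicator 1 + q • ((Xᶜ : Finset V) : Set V).indicator 1) =
      ((X \ S : Finset V) : Set V).indicator 1 +
        (1 - q) • ((Xᶜ : Finset V) : Set V).indicator 1 := by
    funext u
    by_cases huS : u ∈ S
    · simp [huS, hS huS]
    · by_cases huX : u ∈ X <;> simp [huS, huX]
  rw [fracCut, hone_sub]
  simp only [mulVec_add, mulVec_smul, add_dotProduct, dotProduct_add, smul_dotProduct,
    dotProduct_smul, indicator_dotProduct_arcMatrix_mulVec_indicator, smul_eq_mul,
    dArcs_eq_zero_of_subset hX hS sdiff_subset, cast_dArcs_compl_right hX hS,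
    cast_dArcs_compl_left hX sdiff_subset]
  push_cast
  ring

lemma fracCut_eq_surplus {X S : Finset V} (hX : dArcs A X X = 0) (hS : S ⊆ X) :
    fracCut (arcMatrix A)
        ((S : Set V).indicator 1 + (5 / 14 : ℝ) • ((Xᶜ : Finset V) : Set V).indicator 1) =
      3 / 14 * dArcs A univ univ +
        (surplus A S (X \ S) + 3 * (dArcs A Xᶜ Xᶜ : ℝ) / 14) / 14 := by
  rw [fracCut_indicator_add_smul hX hS, cast_dArcs_univ_univ hX, ← sum_sdiff hS, ← sum_sdiff hS,
    surplus]
  simp only [sum_sub_distrib, ← mul_sum]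
  ring

theorem exists_bipartition_of_surplus_nonneg (hirr : ∀ v, ¬ A v v) {X S : Finset V}
    (hX : dArcs A X X = 0) (hS : S ⊆ X) {ε : ℝ} (hε : 0 ≤ ε)
    (hdeg : ∀ y ∈ Xᶜ, (deg A y : ℝ) ≤ ε ^ 2 * (dArcs A univ univ : ℝ) / 4)
    (hout : 0 ≤ surplus A S (X \ S) + 3 * (dArcs A Xᶜ Xᶜ : ℝ) / 14)
    (hin : 0 ≤ surplus (Function.swap A) S (X \ S) + 3 * (dArcs A Xᶜ Xᶜ : ℝ) / 14) :
    ∃ V₁ V₂ : Finset V, V₁ ∪ V₂ = univ ∧ Disjoint V₁ V₂ ∧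
      (3 / 14 - ε) * (dArcs A univ univ : ℝ) ≤ min (dArcs A V₁ V₂ : ℝ) (dArcs A V₂ V₁ : ℝ) := by
  have hcut := fracCut_eq_surplus hX hS
  have hcut' := fracCut_eq_surplus (A := Function.swap A) ((dArcs_swap A X X).trans hX) hS
  simp only [dArcs_swap] at hcut'
  set m : ℝ := (dArcs A univ univ : ℝ) with hm
  have hεm : 0 ≤ ε * m / 2 := by positivity
  set x : V → ℝ :=
    (S : Set V).indicator 1 + (5 / 14 : ℝ) • ((Xᶜ : Finset V) : Set V).indicator 1 with hx
  have hx_apply : ∀ u, x u = if u ∈ X then if u ∈ S then 1 else 0 else 5 / 14 := fun u => by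
    by_cases huX : u ∈ X
    · simp [hx, huX, Set.indicator_apply]
    · simp [hx, huX, mt (@hS u) huX]
  obtain ⟨T, hT⟩ := exists_cut_near_fracCut hirr (Y := Xᶜ) (x := x) (by positivity) hdeg
    ⟨fun u => by rw [hx_apply]; positivity,
      fun u => by rw [hx_apply]; split_ifs <;> norm_num⟩
    (fun u hu => by
      rw [hx_apply, if_pos (by simpa using hu)]
      split_ifs <;> simp)
  have hbound : ε ^ 2 * m / 4 * m = (ε * m / 2) ^ 2 := by ring
  rw [← hm, hbound] at hT
  have hdev := abs_le_of_sq_le_sq' ((le_add_of_nonneg_right (sq_nonneg _)).trans hT) hεm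
  have hdev' := abs_le_of_sq_le_sq' ((le_add_of_nonneg_left (sq_nonneg _)).trans hT) hεm
  exact ⟨T, Tᶜ, union_compl T, disjoint_compl_right,
    le_min (by linarith [hdev.1]) (by linarith [hdev'.1])⟩

end Surplus

section CanGain

variable {V : Type} [Fintype V] (A : V → V → Prop) [DecidableRel A]

/-- The number of arcs at `u` in its less frequent direction. In the paper's notation, `b` is the
sum of these numbers over `X`. -/
def minDeg (u : V) : ℕ :=
  min (outDeg A u) (inDeg A u)

lemma outDeg_inDeg_eq (u : V) :
    ((outDeg A u : ℝ) = sVal A u + minDeg A u ∧ (inDeg A u : ℝ) = minDeg A u) ∨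
      ((outDeg A u : ℝ) = minDeg A u ∧ (inDeg A u : ℝ) = sVal A u + minDeg A u) := by
  rw [sVal, minDeg]
  push_cast
  rcases le_total (inDeg A u : ℝ) (outDeg A u) with h | h
  · left
    rw [max_eq_left (by linarith), min_eq_right h]
    exact ⟨by ring, rfl⟩
  · right
    rw [max_eq_right (by linarith), min_eq_left h]
    exact ⟨rfl, by ring⟩

lemma deg_sub_sVal (u : V) : (deg A u : ℝ) - sVal A u = 2 * minDeg A u := by
  rw [cast_deg]
  rcases outDeg_inDeg_eq A u with h | h <;> linarith

lemma cast_sVal_nonneg (u : V) : (0 : ℝ) ≤ sVal A u := by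
  rw [Int.cast_nonneg_iff, sVal, le_max_iff]
  omega

variable [DecidableEq V]

/-- The vertices of `T` can be divided between the two sides of a cut so that their surplus is at
least `p` from the first side to the second and at least `q` in the opposite direction. -/
def CanGain (T : Finset V) (p q : ℝ) : Prop :=
  ∃ S ⊆ T, p ≤ surplus A S (T \ S) ∧ q ≤ surplus (Function.swap A) S (T \ S)

variable {A}

lemma surplus_union {S S' T T' : Finset V} (hS : Disjoint S S') (hT : Disjoint T T') :
    surplus A (S ∪ S') (T ∪ T') = surplus A S T + surplus A S' T' := by
  rw [surplus, sum_union hS, sum_union hT, surplus, surplus]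
  ring

lemma CanGain.union {T T' : Finset V} {p p' q q' : ℝ} (hT : Disjoint T T')
    (h : CanGain A T p q) (h' : CanGain A T' p' q') : CanGain A (T ∪ T') (p + p') (q + q') := by
  obtain ⟨S, hS, hp, hq⟩ := h
  obtain ⟨S', hS', hp', hq'⟩ := h'
  have hsdiff : (T ∪ T') \ (S ∪ S') = (T \ S) ∪ (T' \ S') := by
    ext u
    have hu : u ∈ T → u ∉ T' := fun h => disjoint_left.1 hT h
    grind
  refine ⟨S ∪ S', union_subset_union hS hS', ?_⟩
  rw [hsdiff, surplus_union (hT.mono hS hS') (hT.mono sdiff_subset sdiff_subset),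
    surplus_union (hT.mono hS hS') (hT.mono sdiff_subset sdiff_subset)]
  exact ⟨add_le_add hp hp', add_le_add hq hq'⟩

lemma CanGain.sum {T : Finset V} {p q : V → ℝ} (h : ∀ u ∈ T, CanGain A {u} (p u) (q u)) :
    CanGain A T (∑ u ∈ T, p u) (∑ u ∈ T, q u) := by
  induction T using Finset.induction_on with
  | empty => exact ⟨∅, by simp [surplus]⟩
  | insert u T hu ih =>
    rw [insert_eq, sum_union (disjoint_singleton_left.2 hu),
      sum_union (disjoint_singleton_left.2 hu), sum_singleton, sum_singleton]
    exact (h u (mem_insert_self u T)).union (disjoint_singleton_left.2 hu)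
      (ih fun v hv => h v (mem_insert_of_mem hv))

lemma canGain_singleton {u : V} {p q : ℝ}
    (h : p ≤ 6 * outDeg A u - 3 * inDeg A u ∧ q ≤ 6 * inDeg A u - 3 * outDeg A u ∨
      p ≤ 2 * inDeg A u - 3 * outDeg A u ∧ q ≤ 2 * outDeg A u - 3 * inDeg A u) :
    CanGain A {u} p q := by
  rcases h with h | h
  · refine ⟨{u}, Subset.rfl, ?_⟩
    rw [sdiff_self, surplus, surplus]
    simpa [outDeg_swap, inDeg_swap] using h
  · refine ⟨∅, empty_subset _, ?_⟩
    rw [sdiff_empty, surplus, surplus]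
    simpa [outDeg_swap, inDeg_swap] using h

variable (A)

lemma canGain_singleton_favor (u : V) :
    CanGain A {u} (2 * sVal A u - minDeg A u) (-3 * sVal A u - minDeg A u) := by
  have hs := cast_sVal_nonneg A u
  apply canGain_singleton
  rcases outDeg_inDeg_eq A u with ⟨ho, hi⟩ | ⟨ho, hi⟩ <;> rw [ho, hi]
  · exact .inl ⟨by linarith, by linarith⟩
  · exact .inr ⟨by linarith, by linarith⟩

lemma canGain_singleton_oppose (u : V) :
    CanGain A {u} (-3 * sVal A u - minDeg A u) (2 * sVal A u - minDeg A u) := by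
  have hs := cast_sVal_nonneg A u
  apply canGain_singleton
  rcases outDeg_inDeg_eq A u with ⟨ho, hi⟩ | ⟨ho, hi⟩ <;> rw [ho, hi]
  · exact .inr ⟨by linarith, by linarith⟩
  · exact .inl ⟨by linarith, by linarith⟩

lemma canGain_singleton_balanced (u : V) :
    CanGain A {u} (3 * minDeg A u - 3 * sVal A u) (3 * minDeg A u - 3 * sVal A u) := by
  have hs := cast_sVal_nonneg A u
  refine canGain_singleton (.inl ?_)
  rcases outDeg_inDeg_eq A u with ⟨ho, hi⟩ | ⟨ho, hi⟩ <;> rw [ho, hi]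
  all_goals constructor <;> linarith

lemma canGain_singleton_first_side (u : V) :
    CanGain A {u} (6 * sVal A u + 3 * minDeg A u) (3 * minDeg A u - 3 * sVal A u) ∨
      CanGain A {u} (3 * minDeg A u - 3 * sVal A u) (6 * sVal A u + 3 * minDeg A u) := by
  rcases outDeg_inDeg_eq A u with ⟨ho, hi⟩ | ⟨ho, hi⟩
  · exact .inl (canGain_singleton (.inl ⟨by linarith, by linarith⟩))
  · exact .inr (canGain_singleton (.inl ⟨by linarith, by linarith⟩))

lemma canGain_favor (T : Finset V) :
    CanGain A T (2 * ∑ u ∈ T, (sVal A u : ℝ) - ∑ u ∈ T, (minDeg A u : ℝ))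
      (-3 * ∑ u ∈ T, (sVal A u : ℝ) - ∑ u ∈ T, (minDeg A u : ℝ)) := by
  simp only [mul_sum, ← sum_sub_distrib]
  exact .sum fun u _ => canGain_singleton_favor A u

lemma canGain_oppose (T : Finset V) :
    CanGain A T (-3 * ∑ u ∈ T, (sVal A u : ℝ) - ∑ u ∈ T, (minDeg A u : ℝ))
      (2 * ∑ u ∈ T, (sVal A u : ℝ) - ∑ u ∈ T, (minDeg A u : ℝ)) := by
  simp only [mul_sum, ← sum_sub_distrib]
  exact .sum fun u _ => canGain_singleton_oppose A u

lemma canGain_balanced (T : Finset V) :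
    CanGain A T (3 * ∑ u ∈ T, (minDeg A u : ℝ) - 3 * ∑ u ∈ T, (sVal A u : ℝ))
      (3 * ∑ u ∈ T, (minDeg A u : ℝ) - 3 * ∑ u ∈ T, (sVal A u : ℝ)) := by
  simp only [mul_sum, ← sum_sub_distrib]
  exact .sum fun u _ => canGain_singleton_balanced A u

variable {A} {X T : Finset V} {j : V}

lemma CanGain.of_erase_of_sdiff (hj : j ∈ T) (hT : T ⊆ X) {p₀ q₀ p₁ q₁ p₂ q₂ : ℝ}
    (h₀ : CanGain A {j} p₀ q₀) (h₁ : CanGain A (T.erase j) p₁ q₁) (h₂ : CanGain A (X \ T) p₂ q₂) :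
    CanGain A X (p₀ + p₁ + p₂) (q₀ + q₁ + q₂) := by
  have hX : ({j} ∪ T.erase j) ∪ X \ T = X := by
    rw [← insert_eq, insert_erase hj, union_sdiff_of_subset hT]
  have hdisj : Disjoint ({j} ∪ T.erase j) (X \ T) := by
    rw [← insert_eq, insert_erase hj]
    exact disjoint_sdiff
  exact hX ▸ (h₀.union (disjoint_singleton_left.2 (notMem_erase j T)) h₁).union hdisj h₂

lemma canGain_or_of_sdiff (hj : j ∈ T) (hT : T ⊆ X) {p q : ℝ}
    (h : CanGain A (X \ T) p q) (h' : CanGain A (X \ T) q p) :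
    CanGain A X
        (9 * sVal A j - 3 * ∑ u ∈ T, (sVal A u : ℝ) +
          4 * minDeg A j - ∑ u ∈ T, (minDeg A u : ℝ) + p)
        (2 * ∑ u ∈ T, (sVal A u : ℝ) - 5 * sVal A j +
          4 * minDeg A j - ∑ u ∈ T, (minDeg A u : ℝ) + q) ∨
      CanGain A X
        (2 * ∑ u ∈ T, (sVal A u : ℝ) - 5 * sVal A j +
          4 * minDeg A j - ∑ u ∈ T, (minDeg A u : ℝ) + q)
        (9 * sVal A j - 3 * ∑ u ∈ T, (sVal A u : ℝ) +
          4 * minDeg A j - ∑ u ∈ T, (minDeg A u : ℝ) + p) := by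
  have hfavor := canGain_favor A (T.erase j)
  have hoppose := canGain_oppose A (T.erase j)
  rw [sum_erase_eq_sub hj, sum_erase_eq_sub hj] at hfavor hoppose
  refine (canGain_singleton_first_side A j).imp (fun hside => ?_) (fun hside => ?_)
  · convert hside.of_erase_of_sdiff hj hT hoppose h using 1 <;> ring
  · convert hside.of_erase_of_sdiff hj hT hfavor h' using 1 <;> ring

theorem exists_bipartition_of_canGain_or (hirr : ∀ v, ¬ A v v) (hX : dArcs A X X = 0) {ε : ℝ}
    (hε : 0 ≤ ε) (hdeg : ∀ y ∈ Xᶜ, (deg A y : ℝ) ≤ ε ^ 2 * (dArcs A univ univ : ℝ) / 4) {p q : ℝ}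
    (h : CanGain A X p q ∨ CanGain A X q p) (hp : 0 ≤ p + 3 * (dArcs A Xᶜ Xᶜ : ℝ) / 14)
    (hq : 0 ≤ q + 3 * (dArcs A Xᶜ Xᶜ : ℝ) / 14) :
    ∃ V₁ V₂ : Finset V, V₁ ∪ V₂ = univ ∧ Disjoint V₁ V₂ ∧
      (3 / 14 - ε) * (dArcs A univ univ : ℝ) ≤ min (dArcs A V₁ V₂ : ℝ) (dArcs A V₂ V₁ : ℝ) := by
  rcases h with ⟨S, hS, hout, hin⟩ | ⟨S, hS, hout, hin⟩ <;>
    exact exists_bipartition_of_surplus_nonneg hirr hX hS hε hdeg (by linarith) (by linarith)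

end CanGain

lemma sum_triple_of_card {α M : Type*} [DecidableEq α] [AddCommMonoid M] {a b c : α}
    (h : #{a, b, c} = 3) (f : α → M) : ∑ u ∈ {a, b, c}, f u = f a + f b + f c := by
  have ha : a ∉ ({b, c} : Finset α) := fun ha => by
    have := card_le_two (a := b) (b := c)
    rw [insert_eq_of_mem ha] at h
    omega
  have hb : b ∉ ({c} : Finset α) := fun hb => by
    have := card_le_two (a := a) (b := c)
    rw [insert_eq_of_mem hb] at h
    omega
  rw [sum_insert ha, sum_insert hb, sum_singleton, add_assoc]

theorem stmt11_general {V : Type} [Fintype V] [DecidableEq V] (A : V → V → Prop) [DecidableRel A]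
    (hirr : ∀ v, ¬ A v v)
    (m : ℕ) (hm : m = dArcs A Finset.univ Finset.univ)
    (X Y : Finset V) (hXY : X ∪ Y = Finset.univ) (hdXY : Disjoint X Y)
    (heX : dArcs A X X = 0)
    (v₁ v₂ v₃ : V) (hv : {v₁, v₂, v₃} ⊆ X) (hcard : ({v₁, v₂, v₃} : Finset V).card = 3)
    (g : ℤ) (hg : g = ∑ x ∈ X \ {v₁, v₂, v₃}, sVal A x)
    (b : ℝ) (hb : b = (∑ x ∈ X, ((deg A x : ℝ) - (sVal A x : ℝ))) / 2)
    (h12 : sVal A v₂ ≤ sVal A v₁) (h23 : sVal A v₃ ≤ sVal A v₂)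
    (ε : ℝ) (hε : 0 ≤ ε) (hdeg : ∀ y ∈ Y, (deg A y : ℝ) ≤ ε ^ 2 * m / 4) :
    (∃ V₁ V₂ : Finset V, V₁ ∪ V₂ = Finset.univ ∧ Disjoint V₁ V₂ ∧
        (3 / 14 - ε) * (m : ℝ) ≤ min (dArcs A V₁ V₂ : ℝ) (dArcs A V₂ V₁ : ℝ)) ∨
      (2 * (sVal A v₂ : ℝ) + 2 * (sVal A v₃ : ℝ) - 3 * (sVal A v₁ : ℝ) - 3 * (g : ℝ) - b +
        3 * (dArcs A Y Y : ℝ) / 14 < 0) ∨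
      ((6 * (sVal A v₁ : ℝ) - 3 * (sVal A v₂ : ℝ) - 3 * (sVal A v₃ : ℝ) + 2 * (g : ℝ) - b +
          3 * (dArcs A Y Y : ℝ) / 14 < 0) ∧
        (6 * (sVal A v₃ : ℝ) - 3 * (sVal A v₁ : ℝ) - 3 * (sVal A v₂ : ℝ) - 3 * (g : ℝ) + b / 3 +
          3 * (dArcs A Y Y : ℝ) / 14 < 0)) := by
  obtain rfl : Y = Xᶜ := (IsCompl.of_eq hdXY.eq_bot hXY).compl_eq.symm
  subst hm
  set T : Finset V := {v₁, v₂, v₃}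
  have hsum (f : V → ℝ) : ∑ u ∈ T, f u = f v₁ + f v₂ + f v₃ := sum_triple_of_card hcard f
  have hgR : (g : ℝ) = ∑ u ∈ X \ T, (sVal A u : ℝ) := by rw [hg, Int.cast_sum]
  have hbX : b = ∑ u ∈ T, (minDeg A u : ℝ) + ∑ u ∈ X \ T, (minDeg A u : ℝ) := by
    simp_rw [hb, deg_sub_sVal, ← mul_sum, ← sum_sdiff hv]
    ring
  rw [or_iff_not_imp_right]
  simp only [not_or, not_and_or, not_lt]
  rintro ⟨hA, hB | hC⟩
  · refine exists_bipartition_of_canGain_or hirr heX hε hdeg (canGain_or_of_sdiff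
      (mem_insert_self v₁ _) hv (canGain_favor A _) (canGain_oppose A _)) ?_ ?_ <;>
    linarith [hsum fun u => (sVal A u : ℝ)]
  · obtain ⟨j, hj, hmax⟩ := exists_max_image T (minDeg A) ⟨v₁, mem_insert_self v₁ _⟩
    have hcj : ∑ u ∈ T, (minDeg A u : ℝ) ≤ 3 * minDeg A j := by
      have := sum_le_card_nsmul T (minDeg A) _ hmax
      rw [hcard, smul_eq_mul] at this
      exact_mod_cast this
    have hrest : (0 : ℝ) ≤ ∑ u ∈ X \ T, (minDeg A u : ℝ) := by positivity
    obtain ⟨hj₁, hj₃⟩ : (sVal A j : ℝ) ≤ sVal A v₁ ∧ (sVal A v₃ : ℝ) ≤ sVal A j := by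
      norm_cast
      grind
    refine exists_bipartition_of_canGain_or hirr heX hε hdeg (canGain_or_of_sdiff
      hj hv (canGain_balanced A _) (canGain_balanced A _)) ?_ ?_ <;>
    linarith [hsum fun u => (sVal A u : ℝ)]

/-- Lemma 3.2(4): the case `d = 4`, `|X'| = 3`. -/
theorem stmt11 {V : Type} [Fintype V] [DecidableEq V] (A : V → V → Prop) [DecidableRel A]
    (hirr : ∀ v, ¬ A v v)
    (m : ℕ) (hm : m = dArcs A Finset.univ Finset.univ)
    (hout : ∀ x, 4 ≤ outDeg A x)
    (X Y : Finset V) (hXY : X ∪ Y = Finset.univ) (hdXY : Disjoint X Y)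
    (heX : dArcs A X X = 0)
    (θ : ℤ) (hθ : IsLeast {t : ℤ | ∃ X₁ ⊆ X, t = |gap A X₁ (X \ X₁) Y|} θ)
    (X' : Finset V) (hX' : X' = X.filter fun x => θ ≤ sVal A x)
    (g : ℤ) (hg : g = ∑ x ∈ X \ X', sVal A x)
    (b : ℝ) (hb : b = (∑ x ∈ X, ((deg A x : ℝ) - (sVal A x : ℝ))) / 2)
    (v₁ v₂ v₃ : V) (hcard : X'.card = 3) (hv : X' = {v₁, v₂, v₃})
    (h12 : sVal A v₂ ≤ sVal A v₁) (h23 : sVal A v₃ ≤ sVal A v₂)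
    (ε : ℝ) (hε : 0 < ε) (hdeg : ∀ y ∈ Y, (deg A y : ℝ) ≤ ε ^ 2 * m / 4) :
    (∃ V₁ V₂ : Finset V, V₁ ∪ V₂ = Finset.univ ∧ Disjoint V₁ V₂ ∧
        (3 / 14 - ε) * (m : ℝ) ≤ min (dArcs A V₁ V₂ : ℝ) (dArcs A V₂ V₁ : ℝ)) ∨
      (2 * (sVal A v₂ : ℝ) + 2 * (sVal A v₃ : ℝ) - 3 * (sVal A v₁ : ℝ) - 3 * (g : ℝ) - b +
        3 * (dArcs A Y Y : ℝ) / 14 < 0) ∨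
      ((6 * (sVal A v₁ : ℝ) - 3 * (sVal A v₂ : ℝ) - 3 * (sVal A v₃ : ℝ) + 2 * (g : ℝ) - b +
          3 * (dArcs A Y Y : ℝ) / 14 < 0) ∧
        (6 * (sVal A v₃ : ℝ) - 3 * (sVal A v₁ : ℝ) - 3 * (sVal A v₂ : ℝ) - 3 * (g : ℝ) + b / 3 +
          3 * (dArcs A Y Y : ℝ) / 14 < 0)) := by
  subst hv
  exact stmt11_general A hirr m hm X Y hXY hdXY heX v₁ v₂ v₃ (hX' ▸ filter_subset _ X) hcard g hg
    b hb h12 h23 ε hε.le hdeg
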